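/- For every even k ≥ 4 and n ≥ 3k, the online Ramsey number satisfies r̃(C_k, C_n) ≤ 2n + 20k. -/

import Mathlib

open SimpleGraph

/-- A board state: the set of red edges and the set of blue edges. -/
abbrev Board : Type := Set (Sym2 ℕ) × Set (Sym2 ℕ)

/-- The set of already colored edges of a board. -/
def Board.colored (B : Board) : Set (Sym2 ℕ) := B.1 ∪ B.2

/-- A Builder strategy selects an edge given the current board. -/
abbrev BuilderStrat : Type := Board → Sym2 ℕ

/-- A Painter strategy colors the selected edge (true = red, false = blue). -/
abbrev PainterStrat : Type := Board → Sym2 ℕ → Bool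

/-- The board after `t` rounds of play from `init`. -/
def playGame (b : BuilderStrat) (p : PainterStrat) (init : Board) : ℕ → Board
  | 0 => init
  | t + 1 =>
      let B := playGame b p init t
      let e := b B
      if p B e then (insert e B.1, B.2) else (B.1, insert e B.2)

/-- Builder's strategy is valid from `init`: along any play it always selects a
previously unselected non-loop edge. -/
def ValidFrom (b : BuilderStrat) (init : Board) : Prop :=
  ∀ p : PainterStrat, ∀ t : ℕ,
    ¬ (b (playGame b p init t)).IsDiag ∧
      b (playGame b p init t) ∉ (playGame b p init t).colored

/-- Builder can force the winning condition `W` within `t` rounds, starting from `init`. -/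
def BuilderWinsIn (init : Board) (W : Board → Prop) (t : ℕ) : Prop :=
  ∃ b : BuilderStrat, ValidFrom b init ∧
    ∀ p : PainterStrat, ∃ s, s ≤ t ∧ W (playGame b p init s)

/-- `G` contains a copy of `H`. -/
def HasCopy {α β : Type} (H : SimpleGraph α) (G : SimpleGraph β) : Prop :=
  ∃ f : α ↪ β, ∀ x y, H.Adj x y → G.Adj (f x) (f y)

/-- The red part of the board contains a copy of `H`. -/
def RedCopy {α : Type} (H : SimpleGraph α) (B : Board) : Prop :=
  HasCopy H (fromEdgeSet B.1)

/-- The blue part of the board contains a copy of `H`. -/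
def BlueCopy {α : Type} (H : SimpleGraph α) (B : Board) : Prop :=
  HasCopy H (fromEdgeSet B.2)

/-- The empty board. -/
def emptyBoard : Board := (∅, ∅)

/-- Winning condition: a red `C_k` or a blue `C_n`. -/
def WinCC (k n : ℕ) (B : Board) : Prop :=
  RedCopy (cycleGraph k) B ∨ BlueCopy (cycleGraph n) B

/-- Winning condition: a red `C_k` or a blue path on `n` vertices. -/
def WinCP (k n : ℕ) (B : Board) : Prop :=
  RedCopy (cycleGraph k) B ∨ BlueCopy (pathGraph n) B

/-- A board consisting of a single blue cycle on the vertices `0, …, m-1`. -/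
def blueCycleBoard (m : ℕ) : Board :=
  (∅, {e | ∃ i : ℕ, i < m ∧ e = s(i, (i + 1) % m)})

/-- A board consisting of a single blue path on the vertices `0, …, m-1`. -/
def bluePathBoard (m : ℕ) : Board :=
  (∅, {e | ∃ i : ℕ, i + 1 < m ∧ e = s(i, i + 1)})

/-- Builder, moving on `B`, can reach a board satisfying `W` in at most `t` rounds. -/
inductive Wins (W : Board → Prop) : ℕ → Board → Prop
  | win {t : ℕ} {B : Board} : W B → Wins W t B
  | ask {t : ℕ} {B : Board} (e : Sym2 ℕ) : ¬ e.IsDiag → e ∉ B.colored →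
      Wins W t (insert e B.1, B.2) → Wins W t (B.1, insert e B.2) → Wins W (t + 1) B

theorem Wins.mono {W : Board → Prop} {t t' : ℕ} {B : Board} (h : Wins W t B) (ht : t ≤ t') :
    Wins W t' B := by
  induction h generalizing t' with
  | win h => exact .win h
  | ask e hd hc _ _ ih₁ ih₂ =>
    obtain ⟨s, rfl⟩ : ∃ s, t' = s + 1 := ⟨t' - 1, by omega⟩
    exact .ask e hd hc (ih₁ (by omega)) (ih₂ (by omega))

theorem exists_uncolored {B : Board} (hB : B.colored.Finite) :
    ∃ e : Sym2 ℕ, ¬ e.IsDiag ∧ e ∉ B.colored := by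
  have hinf : (Set.range fun i : ℕ => s(0, i + 1)).Infinite := by
    apply Set.infinite_range_of_injective
    intro i j hij
    simpa using hij
  obtain ⟨e, ⟨i, rfl⟩, he⟩ := hinf.exists_notMem_finite hB
  exact ⟨_, by simp, he⟩

/-- On every board with finitely many colored edges some move makes optimal progress. -/
theorem exists_good_edge (W : Board → Prop) {B : Board} (hB : B.colored.Finite) :
    ∃ e : Sym2 ℕ, ¬ e.IsDiag ∧ e ∉ B.colored ∧ ∀ t, Wins W t B → ¬ W B →
      ∃ s, t = s + 1 ∧ Wins W s (insert e B.1, B.2) ∧ Wins W s (B.1, insert e B.2) := by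
  classical
  by_cases h : ∃ t, Wins W t B ∧ ¬ W B
  · obtain ⟨hw, hn⟩ := Nat.find_spec h
    have hmin : ∀ t, Wins W t B → Nat.find h ≤ t := fun t ht => Nat.find_min' h ⟨ht, hn⟩
    generalize Nat.find h = t₀ at hw hmin
    cases hw with
    | win h => exact absurd h hn
    | ask e hd hc h₁ h₂ =>
      refine ⟨e, hd, hc, fun t ht _ => ?_⟩
      have := hmin t ht
      exact ⟨t - 1, by omega, h₁.mono (by omega), h₂.mono (by omega)⟩
  · obtain ⟨e, hd, hc⟩ := exists_uncolored hB
    exact ⟨e, hd, hc, fun t ht hn => absurd ⟨t, ht, hn⟩ h⟩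

theorem finite_playGame (b : BuilderStrat) (p : PainterStrat) (t : ℕ) :
    (playGame b p emptyBoard t).colored.Finite := by
  induction t with
  | zero => simp [playGame, emptyBoard, Board.colored]
  | succ t ih =>
    refine (ih.insert (b (playGame b p emptyBoard t))).subset ?_
    simp only [playGame, Board.colored]
    split_ifs
    · rw [Set.insert_union]
    · rw [Set.union_insert]

theorem Wins.builderWinsIn {W : Board → Prop} {t : ℕ} (h : Wins W t emptyBoard) :
    BuilderWinsIn emptyBoard W t := by
  classical
  choose f hd hc hw using fun (B : Board) (hB : B.colored.Finite) => exists_good_edge W hB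
  let b : BuilderStrat := fun B => if hB : B.colored.Finite then f B hB else s(0, 1)
  have hb : ∀ p s, b (playGame b p emptyBoard s) = f _ (finite_playGame b p s) := fun p s => by
    simp only [b]
    rw [dif_pos]
  refine ⟨b, fun p s => ?_, fun p => ?_⟩
  · rw [hb]
    exact ⟨hd _ _, hc _ _⟩
  · by_contra! hcon
    have key : ∀ s, s ≤ t → Wins W (t - s) (playGame b p emptyBoard s) := by
      intro s
      induction s with
      | zero => intro _; exact h
      | succ s ih =>
        intro hs
        obtain ⟨r, hr, h₁, h₂⟩ :=
          hw _ (finite_playGame b p s) _ (ih (by omega)) (hcon s (by omega))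
        rw [← hb] at h₁ h₂
        obtain rfl : r = t - (s + 1) := by omega
        simp only [playGame]
        split_ifs
        · exact h₁
        · exact h₂
    have h0 := key t le_rfl
    rw [Nat.sub_self] at h0
    cases h0 with
    | win h => exact hcon t le_rfl h

/-- The edge `xy` is red. -/
def Board.Red (B : Board) (x y : ℕ) : Prop := s(x, y) ∈ B.1

/-- The edge `xy` is blue. -/
def Board.Blue (B : Board) (x y : ℕ) : Prop := s(x, y) ∈ B.2

section

variable {B B' : Board} {x y : ℕ}

theorem Board.Red.symm (h : B.Red x y) : B.Red y x := by
  rwa [Board.Red, Sym2.eq_swap]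

theorem Board.Blue.symm (h : B.Blue x y) : B.Blue y x := by
  rwa [Board.Blue, Sym2.eq_swap]

theorem Board.Red.mono (h : B.Red x y) (hB : B ≤ B') : B'.Red x y := hB.1 h

theorem Board.Blue.mono (h : B.Blue x y) (hB : B ≤ B') : B'.Blue x y := hB.2 h

/-- Builder may ask for any edge, as an already colored edge gives the answer for free. -/
theorem ask_edge {W : Board → Prop} {t : ℕ} (hxy : x ≠ y)
    (hr : ∀ B', B ≤ B' → B'.Red x y → Wins W t B')
    (hb : ∀ B', B ≤ B' → B'.Blue x y → Wins W t B') : Wins W (t + 1) B := by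
  by_cases hc : s(x, y) ∈ B.colored
  · rcases hc with hc | hc
    · exact (hr B le_rfl hc).mono (by omega)
    · exact (hb B le_rfl hc).mono (by omega)
  · refine .ask s(x, y) (by simpa using hxy) hc (hr _ ?_ ?_) (hb _ ?_ ?_)
    · exact ⟨Set.subset_insert _ _, subset_rfl⟩
    · exact Set.mem_insert _ _
    · exact ⟨subset_rfl, Set.subset_insert _ _⟩
    · exact Set.mem_insert _ _

/-- Builder asks for the edges in `E` one after another until one of them is blue. -/
theorem ask_until_blue {W : Board → Prop} {t : ℕ} (E : List (ℕ × ℕ)) (hE : ∀ e ∈ E, e.1 ≠ e.2)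
    (hb : ∀ B', B ≤ B' → ∀ e ∈ E, B'.Blue e.1 e.2 → Wins W t B')
    (hr : ∀ B', B ≤ B' → (∀ e ∈ E, B'.Red e.1 e.2) → Wins W t B') :
    Wins W (E.length + t) B := by
  induction E generalizing B with
  | nil => exact (hr B le_rfl (by simp)).mono (by simp)
  | cons e E ih =>
    have : (e :: E).length + t = E.length + t + 1 := by simp; omega
    rw [this]
    simp only [List.forall_mem_cons] at hE hb hr
    refine ask_edge hE.1 (fun B₁ h₁ hred => ih hE.2 ?_ ?_) (fun B₁ h₁ hblue => ?_)
    · intro B₂ h₂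
      exact (hb B₂ (h₁.trans h₂)).2
    · exact fun B₂ h₂ hall => hr B₂ (h₁.trans h₂) ⟨hred.mono h₂, hall⟩
    · exact ((hb B₁ h₁).1 hblue).mono (by omega)

/-- Builder asks for the edges in `E` one after another until one of them is red. -/
theorem ask_until_red {W : Board → Prop} {t : ℕ} (E : List (ℕ × ℕ)) (hE : ∀ e ∈ E, e.1 ≠ e.2)
    (hr : ∀ B', B ≤ B' → ∀ e ∈ E, B'.Red e.1 e.2 → Wins W t B')
    (hb : ∀ B', B ≤ B' → (∀ e ∈ E, B'.Blue e.1 e.2) → Wins W t B') :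
    Wins W (E.length + t) B := by
  induction E generalizing B with
  | nil => exact (hb B le_rfl (by simp)).mono (by simp)
  | cons e E ih =>
    have : (e :: E).length + t = E.length + t + 1 := by simp; omega
    rw [this]
    simp only [List.forall_mem_cons] at hE hb hr
    refine ask_edge hE.1 (fun B₁ h₁ hred => ?_) (fun B₁ h₁ hblue => ih hE.2 ?_ ?_)
    · exact ((hr B₁ h₁).1 hred).mono (by omega)
    · intro B₂ h₂
      exact (hr B₂ (h₁.trans h₂)).2
    · exact fun B₂ h₂ hall => hb B₂ (h₁.trans h₂) ⟨hblue.mono h₂, hall⟩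

theorem hasCopy_cycleGraph {S : Set (Sym2 ℕ)} {l : List ℕ} (hl : l.Nodup) (hlen : 2 ≤ l.length)
    (hc : l.IsChain fun x y => s(x, y) ∈ S)
    (hclose : ∀ x ∈ l.getLast?, ∀ y ∈ l.head?, s(x, y) ∈ S) :
    HasCopy (cycleGraph l.length) (fromEdgeSet S) := by
  have hne : l ≠ [] := by rintro rfl; simp at hlen
  have hnext : ∀ i j : Fin l.length, ((i - j : Fin l.length) : ℕ) = 1 →
      s(l.get j, l.get i) ∈ S := by
    intro i j hij
    have hi := i.2
    have hj := j.2
    rw [Fin.sub_def] at hij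
    simp only at hij
    rw [List.isChain_iff_getElem] at hc
    by_cases h : j.1 ≤ i.1
    · have : (l.length - j.1 + i.1) = l.length + (i.1 - j.1) := by omega
      rw [this, Nat.add_mod_left, Nat.mod_eq_of_lt (by omega)] at hij
      have := hc j.1 (by omega)
      simp only [List.get_eq_getElem]
      convert this using 3
      omega
    · rw [Nat.mod_eq_of_lt (by omega)] at hij
      have hj' : j.1 = l.length - 1 := by omega
      have hi' : i.1 = 0 := by omega
      apply hclose
      · rw [List.getLast?_eq_getElem?, ← hj']
        simp
      · rw [List.head?_eq_getElem?, Option.mem_def, List.getElem?_eq_getElem (by omega)]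
        simp [hi']
  refine ⟨⟨l.get, List.nodup_iff_injective_get.1 hl⟩, fun i j hij => ?_⟩
  rw [fromEdgeSet_adj]
  refine ⟨?_, fun h => hij.ne (List.nodup_iff_injective_get.1 hl h)⟩
  rw [cycleGraph_adj'] at hij
  rcases hij with h | h
  · simpa [Sym2.eq_swap] using hnext i j h
  · exact hnext j i h

theorem WinCC.of_red {k n : ℕ} {l : List ℕ} (hl : l.Nodup) (hlen : l.length = k) (hk : 2 ≤ k)
    (hc : l.IsChain B.Red) (hclose : ∀ x ∈ l.getLast?, ∀ y ∈ l.head?, B.Red x y) :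
    WinCC k n B := by
  subst hlen
  exact Or.inl (hasCopy_cycleGraph hl hk hc hclose)

theorem WinCC.of_blue {k n : ℕ} {l : List ℕ} (hl : l.Nodup) (hlen : l.length = n) (hn : 2 ≤ n)
    (hc : l.IsChain B.Blue) (hclose : ∀ x ∈ l.getLast?, ∀ y ∈ l.head?, B.Blue x y) :
    WinCC k n B := by
  subst hlen
  exact Or.inr (hasCopy_cycleGraph hl hn hc hclose)

theorem isChain_range'_of {R : ℕ → ℕ → Prop} {a n s : ℕ}
    (h : ∀ i, i + 1 < n → R (a + s * i) (a + s * (i + 1))) : (List.range' a n s).IsChain R := by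
  rw [List.isChain_iff_getElem]
  intro i hi
  simp only [List.length_range'] at hi
  simpa using h i hi

theorem mem_head?_range' {a n s x : ℕ} (h : x ∈ (List.range' a n s).head?) : x = a := by
  cases n <;> simp_all [List.range'_succ]

theorem mem_getLast?_range' {a n s x : ℕ} (h : x ∈ (List.range' a n s).getLast?) :
    x = a + s * (n - 1) := by
  cases n <;> simp_all [List.range'_concat]

theorem isChain_reverse_range'_of {R : ℕ → ℕ → Prop} {a n : ℕ}
    (h : ∀ i, i + 1 < n → R (a + (i + 1)) (a + i)) : (List.range' a n).reverse.IsChain R := by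
  rw [List.isChain_reverse]
  exact isChain_range'_of fun i hi => by simpa using h i hi

theorem WinCC.of_blue_map {k n N : ℕ} {c : ℕ → ℕ} {l : List ℕ} (hc : Set.InjOn c (Set.Iio N))
    (hl : l.Nodup) (hN : ∀ i ∈ l, i < N) (hlen : l.length = n) (hn : 2 ≤ n)
    (hchain : l.IsChain fun i j => B.Blue (c i) (c j))
    (hclose : ∀ x ∈ l.getLast?, ∀ y ∈ l.head?, B.Blue (c x) (c y)) : WinCC k n B := by
  refine WinCC.of_blue (l := l.map c) ?_ (by simpa) hn ((List.isChain_map c).2 hchain) ?_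
  · exact (List.nodup_map_iff_inj_on hl).2 fun x hx y hy h => hc (hN x hx) (hN y hy) h
  · simpa using hclose

theorem WinCC.of_red_map {k n N : ℕ} {c : ℕ → ℕ} {l : List ℕ} (hc : Set.InjOn c (Set.Iio N))
    (hl : l.Nodup) (hN : ∀ i ∈ l, i < N) (hlen : l.length = k) (hk : 2 ≤ k)
    (hchain : l.IsChain fun i j => B.Red (c i) (c j))
    (hclose : ∀ x ∈ l.getLast?, ∀ y ∈ l.head?, B.Red (c x) (c y)) : WinCC k n B := by
  refine WinCC.of_red (l := l.map c) ?_ (by simpa) hk ((List.isChain_map c).2 hchain) ?_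
  · exact (List.nodup_map_iff_inj_on hl).2 fun x hx y hy h => hc (hN x hx) (hN y hy) h
  · simpa using hclose

/-- From a blue cycle on `n + 2` vertices Builder wins in `2 * k` rounds. -/
theorem wins_of_blue_cycle_add_two {k n : ℕ} (hk : 2 ≤ k) (hn : 3 * k ≤ n) {c : ℕ → ℕ}
    (hc : Set.InjOn c (Set.Iio (n + 2))) (hb : ∀ i < n + 1, B.Blue (c i) (c (i + 1)))
    (hclose : B.Blue (c (n + 1)) (c 0)) : Wins (WinCC k n) (2 * k) B := by
  have hne : ∀ i j, i < n + 2 → j < n + 2 → i ≠ j → c i ≠ c j :=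
    fun i j hi hj hij h => hij (hc hi hj h)
  have hRb : ∀ B', B ≤ B' → ∀ i j, i < n + 1 → j = i + 1 → B'.Blue (c i) (c j) := by
    rintro B' hB' i _ hi rfl
    exact (hb i hi).mono hB'
  have skip : ∀ B', B ≤ B' → ∀ i, i + 3 < n + 2 → B'.Blue (c i) (c (i + 3)) → WinCC k n B' := by
    intro B' hB' i hi h
    refine WinCC.of_blue_map (l := List.range' (i + 3) (n + 2 - (i + 3)) ++ List.range' 0 (i + 1))
      hc ?_ ?_ ?_ (by omega) ?_ ?_
    · simp [List.nodup_append, List.nodup_range']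
      omega
    · simp
      omega
    · simp
      omega
    · rw [List.isChain_append]
      refine ⟨isChain_range'_of fun j hj => hRb B' hB' _ _ (by omega) (by omega),
        isChain_range'_of fun j hj => hRb B' hB' _ _ (by omega) (by omega), fun x hx y hy => ?_⟩
      obtain rfl : x = n + 1 := by have := mem_getLast?_range' hx; omega
      obtain rfl : y = 0 := mem_head?_range' hy
      exact hclose.mono hB'
    · intro x hx y hy
      rw [List.getLast?_append_of_ne_nil _ (by simp)] at hx
      rw [List.head?_append_of_ne_nil _ (by simp; omega)] at hy
      obtain rfl : x = i := by have := mem_getLast?_range' hx; omega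
      obtain rfl : y = x + 3 := mem_head?_range' hy
      exact h
  have chords : ∀ B', B ≤ B' → ∀ a, a ≤ 2 →
      (∀ i < k - 1, B'.Red (c (a + 3 * i)) (c (a + 3 * i + 3))) →
      B'.Red (c a) (c (a + 3 * (k - 1))) → WinCC k n B' := by
    intro B' hB' a ha h hcl
    refine WinCC.of_red_map (l := List.range' a k 3) hc ?_ ?_ (by simp) hk ?_ ?_
    · exact List.nodup_range' (step := 3)
    · simp only [List.mem_range']
      rintro _ ⟨i, hi, rfl⟩
      omega
    · exact isChain_range'_of fun j hj => by simpa [mul_add, add_assoc] using h j (by omega)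
    · intro x hx y hy
      obtain rfl := mem_getLast?_range' hx
      obtain rfl := mem_head?_range' hy
      exact hcl.symm
  let E : ℕ → List (ℕ × ℕ) := fun a =>
    (List.range (k - 1)).map fun j => (c (a + 3 * j), c (a + 3 * j + 3))
  have hE : ∀ a ≤ 2, ∀ e ∈ E a, e.1 ≠ e.2 := by
    intro a ha e he
    simp only [E, List.mem_map, List.mem_range] at he
    obtain ⟨j, hj, rfl⟩ := he
    exact hne _ _ (by omega) (by omega) (by omega)
  have hEb : ∀ a ≤ 2, ∀ B', B ≤ B' → ∀ e ∈ E a, B'.Blue e.1 e.2 → WinCC k n B' := by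
    intro a ha B' hB' e he
    simp only [E, List.mem_map, List.mem_range] at he
    obtain ⟨j, hj, rfl⟩ := he
    exact skip B' hB' _ (by omega)
  have hEr : ∀ a, ∀ B' : Board, (∀ e ∈ E a, B'.Red e.1 e.2) →
      ∀ i < k - 1, B'.Red (c (a + 3 * i)) (c (a + 3 * i + 3)) := by
    intro a B' h i hi
    exact h (c (a + 3 * i), c (a + 3 * i + 3)) (List.mem_map.2 ⟨i, List.mem_range.2 hi, rfl⟩)
  have hlen : 2 * k = (E 0).length + ((E 2).length + (0 + 1 + 1)) := by simp [E]; omega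
  rw [hlen]
  refine ask_until_blue (E 0) (hE 0 (by omega))
    (fun B₁ h₁ e he hbl => .win (hEb 0 (by omega) B₁ h₁ e he hbl)) fun B₁ h₁ r₁ => ?_
  refine ask_until_blue (E 2) (hE 2 (by omega))
    (fun B₂ h₂ e he hbl => .win (hEb 2 (by omega) B₂ (h₁.trans h₂) e he hbl)) fun B₂ h₂ r₂ => ?_
  refine ask_edge (x := c 0) (y := c (0 + 3 * (k - 1))) (hne _ _ (by omega) (by omega) (by omega))
    (fun B₃ h₃ hred => .win ?_) (fun B₃ h₃ b₃ => ?_)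
  · exact chords B₃ (h₁.trans (h₂.trans h₃)) 0 (by omega)
      (fun i hi => (hEr 0 B₁ r₁ i hi).mono (h₂.trans h₃)) hred
  refine ask_edge (x := c 2) (y := c (2 + 3 * (k - 1))) (hne _ _ (by omega) (by omega) (by omega))
    (fun B₄ h₄ hred => .win ?_) (fun B₄ h₄ b₄ => .win ?_)
  · exact chords B₄ (h₁.trans (h₂.trans (h₃.trans h₄))) 2 (by omega)
      (fun i hi => (hEr 2 B₂ r₂ i hi).mono (h₃.trans h₄)) hred
  have hB : B ≤ B₄ := h₁.trans (h₂.trans (h₃.trans h₄))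
  refine WinCC.of_blue_map (l := 0 :: ((List.range' 2 (3 * k - 4)).reverse ++
    List.range' (3 * k - 1) (n + 2 - (3 * k - 1)))) hc ?_ ?_ ?_ (by omega) ?_ ?_
  · simp [List.nodup_append, List.nodup_range']
    exact ⟨fun h => by omega, by omega⟩
  · simp
    omega
  · simp
    omega
  · rw [List.isChain_cons, List.isChain_append]
    refine ⟨fun x hx => ?_, isChain_reverse_range'_of fun j hj => ?_,
      isChain_range'_of fun j hj => hRb B₄ hB _ _ (by omega) (by omega), fun x hx y hy => ?_⟩
    · rw [List.head?_append_of_ne_nil _ (by simp; omega), List.head?_reverse] at hx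
      obtain rfl : x = 0 + 3 * (k - 1) := by have := mem_getLast?_range' hx; omega
      exact b₃.mono h₄
    · exact (hRb B₄ hB _ _ (by omega) (by omega)).symm
    · rw [List.getLast?_reverse] at hx
      obtain rfl := mem_head?_range' hx
      obtain rfl : y = 2 + 3 * (k - 1) := by have := mem_head?_range' hy; omega
      exact b₄
  · intro x hx y hy
    rw [List.getLast?_cons_of_ne_nil (by simp; omega),
      List.getLast?_append_of_ne_nil _ (by simp; omega)] at hx
    obtain rfl : x = n + 1 := by have := mem_getLast?_range' hx; omega
    obtain rfl : y = 0 := by simpa using hy.symm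
    exact hclose.mono hB

/-- From a blue path on `n + 3 * m + 1` vertices Builder wins in `10 * m` rounds (`k = 2 * m`). -/
theorem wins_of_blue_path {m n : ℕ} (hm : 2 ≤ m) (hn : 6 * m ≤ n) {b : ℕ → ℕ}
    (hinj : Set.InjOn b (Set.Iio (n + 3 * m + 1)))
    (hb : ∀ i < n + 3 * m, B.Blue (b i) (b (i + 1))) : Wins (WinCC (2 * m) n) (10 * m) B := by
  have hne : ∀ i j, i < n + 3 * m + 1 → j < n + 3 * m + 1 → i ≠ j → b i ≠ b j :=
    fun i j hi hj hij h => hij (hinj hi hj h)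
  have hRb : ∀ B', B ≤ B' → ∀ i j, i < n + 3 * m → j = i + 1 → B'.Blue (b i) (b j) := by
    rintro B' hB' i _ hi rfl
    exact (hb i hi).mono hB'
  have short : ∀ B', B ≤ B' → ∀ i < 3 * m, B'.Blue (b (i + 1)) (b (i + n)) →
      WinCC (2 * m) n B' := by
    intro B' hB' i hi h
    refine WinCC.of_blue_map (l := List.range' (i + 1) n) hinj List.nodup_range' ?_ (by simp)
      (by omega) (isChain_range'_of fun j hj => hRb B' hB' _ _ (by omega) (by omega))
      fun x hx y hy => ?_
    · simp
      omega
    · obtain rfl : x = i + n := by have := mem_getLast?_range' hx; omega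
      obtain rfl := mem_head?_range' hy
      exact h.symm
  have long : ∀ B', B ≤ B' → ∀ i < 3 * m, B'.Blue (b i) (b (i + n + 1)) →
      Wins (WinCC (2 * m) n) (4 * m) B' := by
    intro B' hB' i hi h
    have := wins_of_blue_cycle_add_two (B := B') (k := 2 * m) (n := n) (c := fun j => b (i + j))
      (by omega) (by omega) ?_ ?_ ?_
    · exact this.mono (by omega)
    · intro x hx y hy hxy
      simp only [Set.mem_Iio] at hx hy
      have := hinj (x₁ := i + x) (x₂ := i + y) (by simp; omega) (by simp; omega) hxy
      omega
    · exact fun j hj => hRb B' hB' _ _ (by omega) (by omega)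
    · exact h.symm
  let g : ℕ → ℕ → ℕ := fun s t => if Even (t + s) then t else t + n
  have chords : ∀ B' : Board, (∀ i < 3 * m, B'.Red (b (i + 1)) (b (i + n))) →
      (∀ i < 3 * m, B'.Red (b i) (b (i + n + 1))) → ∀ s a, a ≤ m + 1 →
      B'.Red (b (g s a)) (b (g s (a + 2 * m - 1))) → WinCC (2 * m) n B' := by
    intro B' h₁ h₂ s a ha hcl
    refine WinCC.of_red_map (l := (List.range' a (2 * m)).map (g s)) hinj ?_ ?_ (by simp)
      (by omega) ?_ ?_
    · refine (List.nodup_map_iff_inj_on List.nodup_range').2 fun x hx y hy hxy => ?_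
      simp only [List.mem_range'_1, g] at *
      split_ifs at hxy <;> omega
    · simp only [List.mem_map, List.mem_range'_1, g]
      rintro _ ⟨i, hi, rfl⟩
      split_ifs <;> omega
    · refine (List.isChain_map _).2 (isChain_range'_of fun j hj => ?_)
      simp only [g, one_mul]
      by_cases hp : Even (a + j + s)
      · have : ¬ Even (a + (j + 1) + s) := by
          rw [show a + (j + 1) + s = a + j + s + 1 by ring, Nat.even_add_one]
          simpa
        rw [if_pos hp, if_neg this]
        convert h₂ (a + j) (by omega) using 2
        omega
      · have : Even (a + (j + 1) + s) := by
          rw [show a + (j + 1) + s = a + j + s + 1 by ring, Nat.even_add_one]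
          exact hp
        rw [if_neg hp, if_pos this]
        exact (h₁ (a + j) (by omega)).symm
    · intro x hx y hy
      simp only [List.getLast?_map, List.head?_map, Option.mem_def, Option.map_eq_some_iff] at hx hy
      obtain ⟨x, hx, rfl⟩ := hx
      obtain ⟨y, hy, rfl⟩ := hy
      obtain rfl := mem_head?_range' hy
      obtain rfl : x = y + 2 * m - 1 := by have := mem_getLast?_range' hx; omega
      exact hcl.symm
  let E₁ : List (ℕ × ℕ) := (List.range (3 * m)).map fun i => (b (i + 1), b (i + n))
  let E₂ : List (ℕ × ℕ) := (List.range (3 * m)).map fun i => (b i, b (i + n + 1))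
  have hlen : 10 * m = E₁.length + (E₂.length + 4 * m) := by simp [E₁, E₂]; omega
  rw [hlen]
  refine ask_until_blue E₁ ?_ ?_ fun B₁ l₁ r₁ => ?_
  · simp only [E₁, List.mem_map, List.mem_range]
    rintro _ ⟨i, hi, rfl⟩
    exact hne _ _ (by omega) (by omega) (by omega)
  · simp only [E₁, List.mem_map, List.mem_range]
    rintro B' hB' _ ⟨i, hi, rfl⟩ h
    exact .win (short B' hB' i hi h)
  refine ask_until_blue E₂ ?_ ?_ fun B₂ l₂ r₂ => ?_
  · simp only [E₂, List.mem_map, List.mem_range]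
    rintro _ ⟨i, hi, rfl⟩
    exact hne _ _ (by omega) (by omega) (by omega)
  · simp only [E₂, List.mem_map, List.mem_range]
    rintro B' hB' _ ⟨i, hi, rfl⟩ h
    exact long B' (l₁.trans hB') i hi h
  have hr₁ : ∀ i < 3 * m, B₂.Red (b (i + 1)) (b (i + n)) := fun i hi =>
    (r₁ (b (i + 1), b (i + n)) (List.mem_map.2 ⟨i, List.mem_range.2 hi, rfl⟩)).mono l₂
  have hr₂ : ∀ i < 3 * m, B₂.Red (b i) (b (i + n + 1)) := fun i hi =>
    r₂ (b i, b (i + n + 1)) (List.mem_map.2 ⟨i, List.mem_range.2 hi, rfl⟩)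
  have chord : ∀ B', B₂ ≤ B' → ∀ s a, a ≤ m + 1 →
      B'.Red (b (g s a)) (b (g s (a + 2 * m - 1))) → WinCC (2 * m) n B' := fun B' hB' =>
    chords B' (fun i hi => (hr₁ i hi).mono hB') (fun i hi => (hr₂ i hi).mono hB')
  have g_even : ∀ a s, Even (a + s) → g s a = a ∧ g s (a + 2 * m - 1) = n + (a + 2 * m - 1) := by
    intro a s h
    have : ¬ Even (a + 2 * m - 1 + s) := by rw [Nat.even_iff] at *; omega
    exact ⟨if_pos h, (if_neg this).trans (by omega)⟩
  have g_odd : ∀ a s, ¬ Even (a + s) → g s a = n + a ∧ g s (a + 2 * m - 1) = a + 2 * m - 1 := by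
    intro a s h
    have : Even (a + 2 * m - 1 + s) := by rw [Nat.even_iff] at *; omega
    exact ⟨(if_neg h).trans (by omega), if_pos this⟩
  refine Wins.mono (t := 0 + 1 + 1 + 1) ?_ (by omega)
  refine ask_edge (x := b 0) (y := b (n + 2 * m - 1)) (hne _ _ (by omega) (by omega) (by omega))
    (fun B₃ l₃ r => .win (chord B₃ l₃ 0 0 (by omega) ?_)) (fun B₃ l₃ b₃ => ?_)
  · obtain ⟨h, h'⟩ := g_even 0 0 (by simp)
    rw [h, h']
    convert r using 2
    omega
  refine ask_edge (x := b n) (y := b (2 * m - 1)) (hne _ _ (by omega) (by omega) (by omega))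
    (fun B₄ l₄ r => .win (chord B₄ (l₃.trans l₄) 1 0 (by omega) ?_)) (fun B₄ l₄ b₄ => ?_)
  · obtain ⟨h, h'⟩ := g_odd 0 1 (by simp)
    rw [h, h', zero_add]
    exact r
  refine ask_edge (x := b (n + (m + 1))) (y := b (3 * m)) (hne _ _ (by omega) (by omega) (by omega))
    (fun B₅ l₅ r => .win (chord B₅ (l₃.trans (l₄.trans l₅)) m (m + 1) (by omega) ?_))
    (fun B₅ l₅ b₅ => .win ?_)
  · obtain ⟨h, h'⟩ := g_odd (m + 1) m (by rw [Nat.even_iff]; omega)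
    rw [h, h']
    convert r using 2
    omega
  have hB : B ≤ B₅ := l₁.trans (l₂.trans (l₃.trans (l₄.trans l₅)))
  refine WinCC.of_blue_map (l := List.range' 0 (2 * m) ++
    ((List.range' (3 * m) (n + 1 - 3 * m)).reverse ++ List.range' (n + (m + 1)) (m - 1))) hinj ?_ ?_
    (by simp; omega) (by omega) ?_ ?_
  · simp only [List.nodup_append, List.nodup_reverse, List.mem_append,
      List.mem_reverse, List.mem_range'_1]
    refine ⟨List.nodup_range', ⟨List.nodup_range', List.nodup_range', ?_⟩, ?_⟩ <;> omega
  · simp only [List.mem_append, List.mem_reverse, List.mem_range'_1]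
    omega
  · rw [List.isChain_append, List.isChain_append]
    refine ⟨isChain_range'_of fun j hj => hRb _ hB _ _ (by omega) (by omega),
      ⟨isChain_reverse_range'_of fun j hj => (hRb _ hB _ _ (by omega) (by omega)).symm,
      isChain_range'_of fun j hj => hRb _ hB _ _ (by omega) (by omega), fun x hx y hy => ?_⟩,
      fun x hx y hy => ?_⟩
    · rw [List.getLast?_reverse] at hx
      obtain rfl := mem_head?_range' hx
      obtain rfl := mem_head?_range' hy
      exact b₅.symm
    · rw [List.head?_append_of_ne_nil _ (by simp; omega), List.head?_reverse] at hy
      obtain rfl : x = 2 * m - 1 := by have := mem_getLast?_range' hx; omega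
      obtain rfl : y = n := by have := mem_getLast?_range' hy; omega
      exact (b₄.mono l₅).symm
  · intro x hx y hy
    rw [List.getLast?_append_of_ne_nil _ (by simp; omega),
      List.getLast?_append_of_ne_nil _ (by simp; omega)] at hx
    rw [List.head?_append_of_ne_nil _ (by simp; omega)] at hy
    obtain rfl : x = n + 2 * m - 1 := by have := mem_getLast?_range' hx; omega
    obtain rfl := mem_head?_range' hy
    exact (b₃.mono (l₄.trans l₅)).symm

theorem wins_of_blue_list {m n : ℕ} (hm : 2 ≤ m) (hn : 6 * m ≤ n) {l : List ℕ}
    (hl : l.Nodup) (hlen : n + 3 * m + 1 ≤ l.length) (hc : l.IsChain B.Blue) :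
    Wins (WinCC (2 * m) n) (10 * m) B := by
  refine wins_of_blue_path hm hn (b := fun i => l.getD i 0) ?_ ?_
  · intro i hi j hj hij
    simp only [Set.mem_Iio] at hi hj
    simp only [List.getD_eq_getElem?_getD] at hij
    rw [List.getElem?_eq_getElem (by omega), List.getElem?_eq_getElem (by omega)] at hij
    exact (List.Nodup.getElem_inj_iff hl).1 hij
  · intro i hi
    simp only [List.getD_eq_getElem?_getD]
    rw [List.getElem?_eq_getElem (by omega), List.getElem?_eq_getElem (by omega)]
    exact List.isChain_iff_getElem.1 hc i (by omega)

/-- From two disjoint blue paths with `n + 5 * m - 1` vertices in total Builder wins by asking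
for a cycle that alternates between initial segments of the two paths. -/
theorem wins_of_two_blue_lists {m n : ℕ} (hm : 2 ≤ m) (hn : 6 * m ≤ n) {l₁ l₂ : List ℕ}
    (hl : (l₁ ++ l₂).Nodup) (hlen : n + 5 * m - 1 ≤ l₁.length + l₂.length)
    (hc₁ : l₁.IsChain B.Blue) (hc₂ : l₂.IsChain B.Blue) :
    Wins (WinCC (2 * m) n) (2 * m + 10 * m) B := by
  obtain ⟨hn₁, hn₂, hdisj⟩ := List.nodup_append.1 hl
  by_cases hs₁ : l₁.length < m
  · exact (wins_of_blue_list hm hn hn₂ (by omega) hc₂).mono (by omega)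
  by_cases hs₂ : l₂.length < m
  · exact (wins_of_blue_list hm hn hn₁ (by omega) hc₁).mono (by omega)
  push Not at hs₁ hs₂
  let x : ℕ → ℕ := fun i => l₁.getD i 0
  let y : ℕ → ℕ := fun i => l₂.getD i 0
  have hx : ∀ i (hi : i < l₁.length), x i = l₁[i] := fun i hi => by
    simp only [x, List.getD_eq_getElem?_getD, List.getElem?_eq_getElem hi, Option.getD_some]
  have hy : ∀ i (hi : i < l₂.length), y i = l₂[i] := fun i hi => by
    simp only [y, List.getD_eq_getElem?_getD, List.getElem?_eq_getElem hi, Option.getD_some]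
  have hxy : ∀ i j, i < m → j < m → x i ≠ y j := fun i j hi hj => by
    rw [hx i (by omega), hy j (by omega)]
    exact hdisj _ (List.getElem_mem _) _ (List.getElem_mem _)
  have hxx : ∀ i j, i < m → j < m → x i = x j → i = j := fun i j hi hj h => by
    rw [hx i (by omega), hx j (by omega)] at h
    exact hn₁.getElem_inj_iff.1 h
  have hyy : ∀ i j, i < m → j < m → y i = y j → i = j := fun i j hi hj h => by
    rw [hy i (by omega), hy j (by omega)] at h
    exact hn₂.getElem_inj_iff.1 h
  have hblue : ∀ B', B ≤ B' → ∀ i j, i < m → j < m → B'.Blue (x i) (y j) →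
      Wins (WinCC (2 * m) n) (10 * m) B' := by
    intro B' hB' i j hi hj h
    refine wins_of_blue_list hm hn (l := (l₁.drop i).reverse ++ l₂.drop j) ?_ ?_ ?_
    · rw [List.nodup_append]
      refine ⟨List.nodup_reverse.2 (hn₁.sublist (List.drop_sublist _ _)),
        hn₂.sublist (List.drop_sublist _ _), fun a ha b hb => ?_⟩
      exact hdisj a (List.mem_of_mem_drop (List.mem_reverse.1 ha)) b (List.mem_of_mem_drop hb)
    · simp
      omega
    · rw [List.isChain_append, List.isChain_reverse]
      refine ⟨(hc₁.drop i).imp fun a b h => (h.mono hB').symm,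
        (hc₂.drop j).imp fun a b h => h.mono hB', fun a ha b hb => ?_⟩
      rw [List.getLast?_reverse, List.head?_drop, List.getElem?_eq_getElem (by omega),
        ← hx i (by omega)] at ha
      rw [List.head?_drop, List.getElem?_eq_getElem (by omega), ← hy j (by omega)] at hb
      cases ha
      cases hb
      exact h
  let c : ℕ → ℕ := fun t => if Even t then x (t / 2) else y (t / 2)
  have hcc : Set.InjOn c (Set.Iio (2 * m)) := by
    intro s hs t ht h
    simp only [Set.mem_Iio, c] at hs ht h
    split_ifs at h with h₁ h₂ h₂
    · have := hxx _ _ (by omega) (by omega) h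
      rw [Nat.even_iff] at *
      omega
    · exact absurd h (hxy _ _ (by omega) (by omega))
    · exact absurd h.symm (hxy _ _ (by omega) (by omega))
    · have := hyy _ _ (by omega) (by omega) h
      rw [Nat.even_iff] at *
      omega
  let E : List (ℕ × ℕ) := (List.range (2 * m)).map fun t => (c t, c ((t + 1) % (2 * m)))
  have hlt : ∀ t < 2 * m, (t + 1) % (2 * m) < 2 * m := fun t ht => Nat.mod_lt _ (by omega)
  have hpar : ∀ t < 2 * m, Even ((t + 1) % (2 * m)) ↔ ¬ Even t := fun t ht => by
    rw [Nat.even_iff, Nat.even_iff, Nat.mod_mul_right_mod]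
    omega
  have hElen : E.length = 2 * m := by simp [E]
  rw [← hElen]
  refine ask_until_blue E ?_ ?_ fun B₁ l₁ hr => .win ?_
  · simp only [E, List.mem_map, List.mem_range]
    rintro _ ⟨t, ht, rfl⟩ h
    have h₁ := hcc (x₁ := t) (x₂ := (t + 1) % (2 * m)) ht (hlt t ht) h
    have h₂ := hpar t ht
    rw [← h₁] at h₂
    tauto
  · simp only [E, List.mem_map, List.mem_range]
    rintro B' hB' _ ⟨t, ht, rfl⟩ h
    have := hlt t ht
    rw [hElen]
    by_cases hp : Even t
    · simp only [c, hpar t ht, hp, not_true, if_true, if_false] at h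
      exact hblue B' hB' _ _ (by omega) (by omega) h
    · simp only [c, hpar t ht, hp, not_false_eq_true, if_true, if_false] at h
      exact hblue B' hB' _ _ (by omega) (by omega) h.symm
  · have hr' : ∀ t < 2 * m, B₁.Red (c t) (c ((t + 1) % (2 * m))) := fun t ht =>
      hr (c t, c ((t + 1) % (2 * m))) (List.mem_map.2 ⟨t, List.mem_range.2 ht, rfl⟩)
    rw [hElen]
    refine WinCC.of_red_map (l := List.range' 0 (2 * m)) hcc List.nodup_range' (by simp) (by simp)
      (by omega) (isChain_range'_of fun j hj => ?_) fun a ha b hb => ?_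
    · have := hr' j (by omega)
      rw [Nat.mod_eq_of_lt hj] at this
      simpa using this
    · obtain rfl : a = 2 * m - 1 := by have := mem_getLast?_range' ha; omega
      obtain rfl := mem_head?_range' hb
      have := hr' (2 * m - 1) (by omega)
      rwa [Nat.sub_add_cancel (by omega), Nat.mod_self] at this

/-- A family of disjoint nonempty blue paths. -/
structure IsBlueForest (B : Board) (L : List (List ℕ)) : Prop where
  nodup : L.flatten.Nodup
  ne_nil : ∀ l ∈ L, l ≠ []
  isChain : ∀ l ∈ L, l.IsChain B.Blue

theorem IsBlueForest.mono {L : List (List ℕ)} (h : IsBlueForest B L) (hB : B ≤ B') :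
    IsBlueForest B' L :=
  ⟨h.nodup, h.ne_nil, fun l hl => (h.isChain l hl).imp fun _ _ hab => hab.mono hB⟩

theorem IsBlueForest.perm {L L' : List (List ℕ)} (h : IsBlueForest B L) (hL : L.Perm L') :
    IsBlueForest B L' :=
  ⟨hL.flatten.nodup_iff.1 h.nodup, fun l hl => h.ne_nil l (hL.mem_iff.2 hl),
    fun l hl => h.isChain l (hL.mem_iff.2 hl)⟩

theorem mem_head?_iff_headD {l : List ℕ} (hl : l ≠ []) {x : ℕ} : x ∈ l.head? ↔ x = l.headD 0 := by
  cases l with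
  | nil => exact absurd rfl hl
  | cons a l => simp [eq_comm]

theorem headD_mem {l : List ℕ} (hl : l ≠ []) : l.headD 0 ∈ l := by
  cases l with
  | nil => exact absurd rfl hl
  | cons a l => simp

theorem flatten_merge_perm (p q : List ℕ) (u : ℕ) (L : List (List ℕ)) :
    ((p.reverse ++ u :: q) :: L).flatten.Perm (u :: (p :: q :: L).flatten) := by
  simp only [List.flatten_cons]
  have h : (p.reverse ++ u :: q).Perm (u :: (p ++ q)) :=
    List.perm_middle.trans (((List.reverse_perm p).append_right q).cons u)
  simpa using h.append_right L.flatten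

theorem IsBlueForest.merge {p q : List ℕ} {L : List (List ℕ)} {u : ℕ}
    (h : IsBlueForest B (p :: q :: L)) (hu : u ∉ (p :: q :: L).flatten)
    (hp : B.Blue (p.headD 0) u) (hq : B.Blue (q.headD 0) u) :
    IsBlueForest B ((p.reverse ++ u :: q) :: L) := by
  have hpn := h.ne_nil p (by simp)
  have hqn := h.ne_nil q (by simp)
  refine ⟨(flatten_merge_perm p q u L).nodup_iff.2 (h.nodup.cons hu), fun l hl => ?_,
    fun l hl => ?_⟩
  · rcases List.mem_cons.1 hl with rfl | hl
    · simp
    · exact h.ne_nil l (by simp [hl])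
  · rcases List.mem_cons.1 hl with rfl | hl
    · rw [List.isChain_append, List.isChain_reverse, List.isChain_cons]
      refine ⟨(h.isChain p (by simp)).imp fun _ _ hab => hab.symm, ⟨fun y hy => ?_,
        h.isChain q (by simp)⟩, fun x hx y hy => ?_⟩
      · rw [mem_head?_iff_headD hqn] at hy
        exact hy ▸ hq.symm
      · rw [List.getLast?_reverse, mem_head?_iff_headD hpn] at hx
        obtain rfl : y = u := by simpa using hy.symm
        exact hx ▸ hp
    · exact h.isChain l (by simp [hl])

/-- Asking for the edges from `u` to the heads of three paths yields two edges of one color. -/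
theorem ask_three_heads {W : Board → Prop} {t u : ℕ} {a b c : List ℕ} (ha : a.headD 0 ≠ u)
    (hb : b.headD 0 ≠ u) (hc : c.headD 0 ≠ u)
    (hblue : ∀ B', B ≤ B' → ∀ p q r : List ℕ, [a, b, c].Perm [p, q, r] →
      B'.Blue (p.headD 0) u → B'.Blue (q.headD 0) u → Wins W t B')
    (hred : ∀ B', B ≤ B' → ∀ p q r : List ℕ, [a, b, c].Perm [p, q, r] →
      B'.Red (p.headD 0) u → B'.Red (q.headD 0) u → Wins W t B') :
    Wins W (t + 3) B := by
  have hac : [a, b, c].Perm [a, c, b] := (List.Perm.swap c b []).cons a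
  have hbc : [a, b, c].Perm [b, c, a] := (List.Perm.swap b a [c]).trans
    ((List.Perm.swap c a []).cons b)
  refine ask_edge ha (fun B₁ h₁ ra => ?_) (fun B₁ h₁ ba => ?_) <;>
  refine ask_edge hb (fun B₂ h₂ rb => ?_) (fun B₂ h₂ bb => ?_)
  · exact (hred B₂ (h₁.trans h₂) a b c (.refl _) (ra.mono h₂) rb).mono (by omega)
  · refine ask_edge hc (fun B₃ h₃ rc => ?_) (fun B₃ h₃ bc => ?_)
    · exact hred B₃ (h₁.trans (h₂.trans h₃)) a c b hac (ra.mono (h₂.trans h₃)) rc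
    · exact hblue B₃ (h₁.trans (h₂.trans h₃)) b c a hbc (bb.mono h₃) bc
  · refine ask_edge hc (fun B₃ h₃ rc => ?_) (fun B₃ h₃ bc => ?_)
    · exact hred B₃ (h₁.trans (h₂.trans h₃)) b c a hbc (rb.mono h₃) rc
    · exact hblue B₃ (h₁.trans (h₂.trans h₃)) a c b hac (ba.mono (h₂.trans h₃)) bc
  · exact (hblue B₂ (h₁.trans h₂) a b c (.refl _) (ba.mono h₂) bb).mono (by omega)

theorem red_path_win {m n i x : ℕ} (hm : 2 ≤ m) {r : ℕ → ℕ}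
    (hr : Set.InjOn r (Set.Iio (4 * m - 4)))
    (hred : ∀ j, j + 1 < 4 * m - 4 → B.Red (r j) (r (j + 1))) (hx : ∀ j < 4 * m - 4, r j ≠ x)
    (hi : i < 2 * m - 2) (h₁ : B.Red x (r i)) (h₂ : B.Red x (r (i + (2 * m - 2)))) :
    WinCC (2 * m) n B := by
  refine WinCC.of_red (l := x :: (List.range' i (2 * m - 1)).map r) ?_ (by simp; omega) (by omega)
    ?_ fun a ha b hb => ?_
  · rw [List.nodup_cons]
    refine ⟨?_, (List.nodup_map_iff_inj_on List.nodup_range').2 fun a ha b hb hab => ?_⟩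
    · simp only [List.mem_map, List.mem_range'_1]
      rintro ⟨j, hj, hj'⟩
      exact hx j (by omega) hj'
    · simp only [List.mem_range'_1] at ha hb
      exact hr (by simp; omega) (by simp; omega) hab
  · rw [List.isChain_cons, List.isChain_map]
    refine ⟨fun y hy => ?_, isChain_range'_of fun j hj => ?_⟩
    · simp only [List.head?_map, Option.mem_def, Option.map_eq_some_iff] at hy
      obtain ⟨y, hy, rfl⟩ := hy
      obtain rfl := mem_head?_range' hy
      exact h₁
    · have := hred (i + j) (by omega)
      simpa [add_assoc] using this
  · obtain rfl : b = x := by simpa using hb.symm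
    rw [List.getLast?_cons_of_ne_nil (by simp; omega), List.getLast?_map] at ha
    simp only [Option.mem_def, Option.map_eq_some_iff] at ha
    obtain ⟨y, hy, rfl⟩ := ha
    obtain rfl : y = i + (2 * m - 2) := by have := mem_getLast?_range' hy; omega
    exact h₂.symm

theorem wins_of_short_blue_forest {m n : ℕ} (hm : 2 ≤ m) (hn : 6 * m ≤ n) {L : List (List ℕ)}
    (hL : IsBlueForest B L) (hlen : L.length ≤ 2) (hsum : n + 5 * m - 1 ≤ L.flatten.length) :
    Wins (WinCC (2 * m) n) (2 * m + 10 * m) B := by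
  match L, hlen with
  | [], _ => simp at hsum; omega
  | [a], _ =>
    exact wins_of_two_blue_lists hm hn (l₁ := a) (l₂ := []) (by simpa using hL.nodup)
      (by simpa using hsum) (hL.isChain a (by simp)) List.isChain_nil
  | [a, b], _ =>
    exact wins_of_two_blue_lists hm hn (l₁ := a) (l₂ := b) (by simpa using hL.nodup)
      (by simpa using hsum) (hL.isChain a (by simp)) (hL.isChain b (by simp))

/-- With the help of a red path `r`, Builder joins the blue paths of a small forest one by one:
three heads are asked for against `r i`, and two of them against `r (i + (2 * m - 2))` if at most
one of the answers was blue. -/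
theorem wins_of_blue_forest {m n s i : ℕ} (hm : 2 ≤ m) (hn : 6 * m ≤ n) {r : ℕ → ℕ}
    (hr : Set.InjOn r (Set.Iio (4 * m - 4)))
    (hred : ∀ j, j + 1 < 4 * m - 4 → B.Red (r j) (r (j + 1))) {L : List (List ℕ)}
    (hL : IsBlueForest B L) (hlen : L.length ≤ 2 + s) (hs : i + s ≤ 2 * m - 2)
    (hsum : n + 5 * m - 1 ≤ L.flatten.length)
    (hunused : ∀ j < 4 * m - 4, r j ∈ L.flatten → j < i ∨ (2 * m - 2 ≤ j ∧ j < 2 * m - 2 + i))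
    (hend : ∀ l ∈ L, ∀ x, x ∈ l.head? ∨ x ∈ l.getLast? → ∀ j < 4 * m - 4, r j ≠ x) :
    Wins (WinCC (2 * m) n) (5 * s + (2 * m + 10 * m)) B := by
  induction s generalizing B L i with
  | zero => exact (wins_of_short_blue_forest hm hn hL hlen hsum).mono (by omega)
  | succ s ih =>
  by_cases hlen2 : L.length ≤ 2
  · exact (wins_of_short_blue_forest hm hn hL hlen2 hsum).mono (by omega)
  obtain ⟨a, b, c, L, rfl⟩ : ∃ a b c L', L = a :: b :: c :: L' := by
    rcases L with _ | ⟨a, _ | ⟨b, _ | ⟨c, L⟩⟩⟩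
    · simp at hlen2
    · simp at hlen2
    · simp at hlen2
    · exact ⟨a, b, c, L, rfl⟩
  have hhead : ∀ l ∈ a :: b :: c :: L, ∀ j < 4 * m - 4, r j ≠ l.headD 0 := fun l hl =>
    hend l hl _ (Or.inl ((mem_head?_iff_headD (hL.ne_nil l hl)).2 rfl))
  have step : ∀ B', B ≤ B' → ∀ p q w : List ℕ, [a, b, c].Perm [p, q, w] →
      ∀ j, j = i ∨ j = i + (2 * m - 2) → B'.Blue (p.headD 0) (r j) → B'.Blue (q.headD 0) (r j) →
      Wins (WinCC (2 * m) n) (5 * s + (2 * m + 10 * m)) B' := by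
    intro B' hB' p q w hperm j hj hp hq
    have hperm' : (a :: b :: c :: L).Perm (p :: q :: w :: L) := hperm.append_right L
    have hju : r j ∉ (p :: q :: w :: L).flatten := fun h => by
      have := hunused j (by omega) (hperm'.flatten.mem_iff.2 h)
      omega
    have hfl := flatten_merge_perm p q (r j) (w :: L)
    have hL' := (hL.mono hB').perm hperm'
    have hpn := hL'.ne_nil p (by simp)
    have hqn := hL'.ne_nil q (by simp)
    refine ih (i := i + 1) (fun x hx => (hred x hx).mono hB') (hL'.merge hju hp hq) ?_ (by omega)
      ?_ ?_ ?_
    · simp at hlen ⊢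
      omega
    · rw [hfl.length_eq, List.length_cons, ← hperm'.flatten.length_eq]
      omega
    · intro x hx hxm
      rw [hfl.mem_iff, List.mem_cons, ← hperm'.flatten.mem_iff] at hxm
      rcases hxm with hxm | hxm
      · have := hr (x₁ := x) (x₂ := j) hx (by simp; omega) hxm
        omega
      · have := hunused x hx hxm
        omega
    · intro l hl x hx
      rcases List.mem_cons.1 hl with rfl | hl
      · rw [List.head?_append_of_ne_nil _ (by simpa), List.getLast?_append_of_ne_nil _ (by simp),
          List.head?_reverse, List.getLast?_cons_of_ne_nil hqn] at hx
        rcases hx with hx | hx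
        · exact hend p (hperm'.mem_iff.2 (by simp)) x (Or.inr hx)
        · exact hend q (hperm'.mem_iff.2 (by simp)) x (Or.inr hx)
      · exact hend l (hperm'.mem_iff.2 (by simp_all)) x hx
  have hab : 5 * (s + 1) + (2 * m + 10 * m) = 5 * s + (2 * m + 10 * m) + 1 + 1 + 3 := by ring
  rw [hab]
  refine ask_three_heads (u := r i) (a := a) (b := b) (c := c)
    (hhead a (by simp) i (by omega)).symm (hhead b (by simp) i (by omega)).symm
    (hhead c (by simp) i (by omega)).symm ?_ ?_
  · intro B' hB' p q w hperm hp hq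
    exact (step B' hB' p q w hperm i (Or.inl rfl) hp hq).mono (by omega)
  · intro B' hB' p q w hperm hp hq
    have hp' : ∀ j < 4 * m - 4, r j ≠ p.headD 0 :=
      hhead p (List.mem_append_left L (hperm.mem_iff.2 (by simp)))
    have hq' : ∀ j < 4 * m - 4, r j ≠ q.headD 0 :=
      hhead q (List.mem_append_left L (hperm.mem_iff.2 (by simp)))
    refine ask_edge (hp' (i + (2 * m - 2)) (by omega)).symm (fun B₁ h₁ r₁ => .win ?_)
      (fun B₁ h₁ b₁ => ?_)
    · exact red_path_win hm hr (fun j hj => (hred j hj).mono (hB'.trans h₁)) hp' (by omega)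
        (hp.mono h₁) r₁
    refine ask_edge (hq' (i + (2 * m - 2)) (by omega)).symm (fun B₂ h₂ r₂ => .win ?_)
      (fun B₂ h₂ b₂ => ?_)
    · exact red_path_win hm hr (fun j hj => (hred j hj).mono (hB'.trans (h₁.trans h₂))) hq'
        (by omega) (hq.mono (h₁.trans h₂)) r₂
    exact step B₂ (hB'.trans (h₁.trans h₂)) p q w hperm _ (Or.inr rfl) (b₁.mono h₂) b₂

/-- Blue edges from the last vertex of each path to the head of the path `d` places below join the
paths into at most `d` blue paths. -/
theorem IsBlueForest.exists_linked {d : ℕ} (hd : 1 ≤ d) {S : List (List ℕ)}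
    (hS : IsBlueForest B S)
    (hlink : ∀ i (h : i + d < S.length), ∀ x ∈ (S[i]).getLast?, ∀ y ∈ (S[i + d]).head?,
      B.Blue x y) :
    ∃ L, IsBlueForest B L ∧ L.length ≤ min S.length d ∧ L.flatten.Perm S.flatten := by
  obtain ⟨N, hN⟩ : ∃ N, S.length ≤ N := ⟨_, le_rfl⟩
  induction N generalizing S with
  | zero => exact ⟨S, hS, by omega, .refl _⟩
  | succ N ih =>
  by_cases hlen : S.length ≤ d
  · exact ⟨S, hS, by omega, .refl _⟩
  rcases S with _ | ⟨q, T⟩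
  · simp at hlen
  simp only [List.length_cons] at hlen hN
  have hdT : d - 1 < T.length := by omega
  have hperm : (T.set (d - 1) (q ++ T[d - 1])).flatten.Perm (q :: T).flatten := by
    rw [List.set_eq_take_append_cons_drop, if_pos hdT]
    have hT : T.flatten =
        (T.take (d - 1)).flatten ++ (T[d - 1] ++ (T.drop (d - 1 + 1)).flatten) := by
      rw [← List.flatten_cons, ← List.flatten_append, List.getElem_cons_drop, List.take_append_drop]
    rw [List.flatten_cons, hT, List.flatten_append, List.flatten_cons, List.append_assoc,
      ← List.append_assoc]
    simpa using (List.perm_append_comm (l₁ := (T.take (d - 1)).flatten) (l₂ := q)).append_right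
      (T[d - 1] ++ (T.drop (d - 1 + 1)).flatten)
  suffices h : ∃ L, IsBlueForest B L ∧ L.length ≤ min (T.set (d - 1) (q ++ T[d - 1])).length d ∧
      L.flatten.Perm (T.set (d - 1) (q ++ T[d - 1])).flatten by
    obtain ⟨L, hL, hLlen, hLp⟩ := h
    refine ⟨L, hL, ?_, hLp.trans hperm⟩
    simp only [List.length_set] at hLlen
    simp only [List.length_cons]
    omega
  refine ih ?_ ?_ (by simp; omega)
  · refine ⟨hperm.nodup_iff.2 hS.nodup, fun l hl => ?_, fun l hl => ?_⟩
    · rcases List.mem_or_eq_of_mem_set hl with hl | rfl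
      · exact hS.ne_nil l (by simp [hl])
      · simp [hS.ne_nil q (by simp)]
    · rcases List.mem_or_eq_of_mem_set hl with hl | rfl
      · exact hS.isChain l (by simp [hl])
      · rw [List.isChain_append]
        refine ⟨hS.isChain q (by simp), hS.isChain _ (by simp), ?_⟩
        have := hlink 0 (by simp; omega)
        simpa [List.getElem_cons, show d ≠ 0 by omega] using this
  · intro i hi x hx y hy
    simp only [List.length_set] at hi
    rw [List.getElem_set_ne (by omega)] at hy
    refine hlink (i + 1) (by simp; omega) x ?_ y ?_
    · rw [List.getElem_cons_succ]
      by_cases hid : d - 1 = i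
      · subst hid
        rw [List.getElem_set_self,
          List.getLast?_append_of_ne_nil _ (hS.ne_nil _ (by simp))] at hx
        exact hx
      · rwa [List.getElem_set_ne hid] at hx
    · simpa [show i + 1 + d = i + d + 1 by omega] using hy

/-- The head of each path below is joined in red to both ends of the path above it. -/
def IsRedStack (B : Board) (S : List (List ℕ)) : Prop :=
  S.IsChain fun q q' => ∀ y ∈ q'.head?, (∀ x ∈ q.head?, B.Red x y) ∧ ∀ x ∈ q.getLast?, B.Red x y

theorem IsRedStack.mono {S : List (List ℕ)} (h : IsRedStack B S) (hB : B ≤ B') :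
    IsRedStack B' S :=
  List.IsChain.imp (fun _ _ hq y hy => ⟨fun x hx => ((hq y hy).1 x hx).mono hB,
    fun x hx => ((hq y hy).2 x hx).mono hB⟩) h

theorem IsBlueForest.sublist {S T : List (List ℕ)} (h : IsBlueForest B S) (hT : T.Sublist S) :
    IsBlueForest B T :=
  ⟨h.nodup.sublist hT.flatten, fun l hl => h.ne_nil l (hT.subset hl),
    fun l hl => h.isChain l (hT.subset hl)⟩

theorem IsBlueForest.nodup_map_headD {S : List (List ℕ)} (h : IsBlueForest B S) :
    (S.map fun q => q.headD 0).Nodup := by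
  induction S with
  | nil => simp
  | cons q S ih =>
    have hS := h.sublist (List.sublist_cons_self q S)
    rw [List.map_cons, List.nodup_cons]
    refine ⟨fun hm => ?_, ih hS⟩
    obtain ⟨q', hq', hh⟩ := List.mem_map.1 hm
    have hn := h.nodup
    rw [List.flatten_cons, List.nodup_append] at hn
    exact hn.2.2 _ (headD_mem (h.ne_nil q (by simp))) _
      (List.mem_flatten.2 ⟨q', hq', headD_mem (hS.ne_nil q' hq')⟩) hh.symm

/-- A red edge closing up `k` consecutive paths of a red stack gives a red `C_k`. -/
theorem red_stack_win {k n : ℕ} (hk : 2 ≤ k) {q : List ℕ} {T : List (List ℕ)}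
    (hF : IsBlueForest B (q :: T)) (hS : IsRedStack B (q :: T)) (hlen : T.length = k - 1) {x : ℕ}
    (hx : x ∈ q.getLast?) (hclose : ∀ q' ∈ T.getLast?, ∀ y ∈ q'.head?, B.Red x y) :
    WinCC k n B := by
  have hT := hF.sublist (List.sublist_cons_self q T)
  rw [IsRedStack, List.isChain_cons] at hS
  refine WinCC.of_red (l := x :: T.map fun q => q.headD 0) ?_ (by simp; omega) hk ?_
    fun a ha b hb => ?_
  · rw [List.nodup_cons]
    refine ⟨fun hm => ?_, hT.nodup_map_headD⟩
    obtain ⟨q', hq', hh⟩ := List.mem_map.1 hm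
    have hn := hF.nodup
    rw [List.flatten_cons, List.nodup_append] at hn
    exact hn.2.2 _ (List.mem_of_mem_getLast? hx) _
      (List.mem_flatten.2 ⟨q', hq', headD_mem (hT.ne_nil q' hq')⟩) hh.symm
  · rw [List.isChain_cons, List.isChain_map]
    refine ⟨fun y hy => ?_, ?_⟩
    · rw [List.head?_map] at hy
      obtain ⟨q', hq', rfl⟩ := Option.map_eq_some_iff.1 hy
      exact (hS.1 q' hq' _ ((mem_head?_iff_headD
        (hT.ne_nil q' (List.mem_of_mem_head? hq'))).2 rfl)).2 x hx
    · rw [List.isChain_iff_getElem] at *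
      intro i hi
      exact (hS.2 i hi _ ((mem_head?_iff_headD (hT.ne_nil _ (List.getElem_mem _))).2 rfl)).1 _
        ((mem_head?_iff_headD (hT.ne_nil _ (List.getElem_mem _))).2 rfl)
  · obtain rfl : b = x := by simpa using hb.symm
    have hTn : T ≠ [] := by rintro rfl; simp at hlen; omega
    rw [List.getLast?_cons_of_ne_nil (by simpa), List.getLast?_map] at ha
    obtain ⟨q', hq', rfl⟩ := Option.map_eq_some_iff.1 ha
    exact (hclose q' hq' _ ((mem_head?_iff_headD
      (hT.ne_nil q' (List.mem_of_mem_getLast? hq'))).2 rfl)).symm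

theorem wins_of_red_stack {m n : ℕ} (hm : 2 ≤ m) (hn : 6 * m ≤ n) {r : ℕ → ℕ}
    (hr : Set.InjOn r (Set.Iio (4 * m - 4)))
    (hred : ∀ j, j + 1 < 4 * m - 4 → B.Red (r j) (r (j + 1))) {S : List (List ℕ)}
    (hF : IsBlueForest B S) (hS : IsRedStack B S) (hsum : n + 5 * m - 1 ≤ S.flatten.length)
    (hdisj : ∀ j < 4 * m - 4, r j ∉ S.flatten) :
    Wins (WinCC (2 * m) n) (S.length + (20 * m - 4)) B := by
  let z : ℕ → ℕ := fun i => (S.getD i []).headD 0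
  let a : ℕ → ℕ := fun i => ((S.getD i []).getLast?).getD 0
  have hz : ∀ i (h : i < S.length), ∀ x, x ∈ (S[i]).head? ↔ x = z i := fun i h x => by
    rw [mem_head?_iff_headD (hF.ne_nil _ (List.getElem_mem _))]
    simp [z, List.getElem?_eq_getElem h]
  have ha : ∀ i (h : i < S.length), ∀ x, x ∈ (S[i]).getLast? ↔ x = a i := fun i h x => by
    rw [List.getLast?_eq_some_getLast (hF.ne_nil _ (List.getElem_mem _))]
    simp [a, List.getElem?_eq_getElem h,
      List.getLast?_eq_some_getLast (hF.ne_nil _ (List.getElem_mem h)), eq_comm]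
  let E : List (ℕ × ℕ) :=
    (List.range (S.length - (2 * m - 1))).map fun i => (a i, z (i + (2 * m - 1)))
  have hElen : E.length = S.length - (2 * m - 1) := by simp [E]
  refine Wins.mono (t := E.length + (5 * (min S.length (2 * m - 1) - 2) + (2 * m + 10 * m))) ?_
    (by omega)
  refine ask_until_red E ?_ ?_ fun B' hB' hb => ?_
  · simp only [E, List.mem_map, List.mem_range]
    rintro _ ⟨i, hi, rfl⟩ h
    have hp := (List.nodup_flatten.1 hF.nodup).2
    have hd := List.pairwise_iff_getElem.1 hp i (i + (2 * m - 1)) (by omega) (by omega) (by omega)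
    exact hd (List.mem_of_mem_getLast? ((ha i (by omega) _).2 rfl))
      (List.mem_of_mem_head? ((hz _ (by omega) _).2 h))
  · simp only [E, List.mem_map, List.mem_range]
    rintro B' hB' _ ⟨i, hi, rfl⟩ h
    have hdrop : S.drop i = S[i] :: S.drop (i + 1) := List.drop_eq_getElem_cons (by omega)
    have htake : (S.drop i).take (2 * m - 1 + 1) = S[i] :: (S.drop (i + 1)).take (2 * m - 1) := by
      rw [hdrop, List.take_succ_cons]
    have hlen : ((S.drop (i + 1)).take (2 * m - 1)).length = 2 * m - 1 := by simp; omega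
    refine .win (red_stack_win (by omega) (q := S[i]) (T := (S.drop (i + 1)).take (2 * m - 1))
      (x := a i) ?_ ?_ hlen ((ha i (by omega) _).2 rfl) fun q' hq' y hy => ?_)
    · rw [← htake]
      exact (hF.mono hB').sublist ((List.take_sublist _ _).trans (List.drop_sublist _ _))
    · rw [← htake]
      exact ((hS.mono hB').drop i).take _
    · rw [List.getLast?_eq_getElem?, hlen, List.getElem?_take_of_lt (by omega), List.getElem?_drop,
        List.getElem?_eq_getElem (by omega)] at hq'
      cases hq'
      rw [hz] at hy
      convert h using 1
      rw [hy]
      congr 1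
      omega
  · obtain ⟨L, hL, hLlen, hLp⟩ := (hF.mono hB').exists_linked (d := 2 * m - 1) (by omega)
      fun i hi x hx y hy => by
        rw [ha] at hx
        rw [hz] at hy
        subst hx hy
        exact hb (a i, z (i + (2 * m - 1)))
          (List.mem_map.2 ⟨i, List.mem_range.2 (by omega), rfl⟩)
    refine wins_of_blue_forest hm hn (i := 0) hr (fun j hj => (hred j hj).mono hB') hL (by omega)
      (by omega) (by rwa [hLp.length_eq]) ?_ ?_
    · intro j hj hjm
      exact absurd (hLp.mem_iff.1 hjm) (hdisj j hj)
    · rintro l hl x hx j hj rfl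
      refine hdisj j hj (hLp.mem_iff.1 (List.mem_flatten.2 ⟨l, hl, ?_⟩))
      rcases hx with hx | hx
      · exact List.mem_of_mem_head? hx
      · exact List.mem_of_mem_getLast? hx

/-- Builder grows a stack `S` of blue paths, asking for the edge between the head of its top path
and the head of a working path `W`, until it has `n + 5 * m - 1` vertices. -/
theorem wins_of_trunk {m n F : ℕ} (hm : 2 ≤ m) (hn : 6 * m ≤ n) {r : ℕ → ℕ}
    (hr : Set.InjOn r (Set.Iio (4 * m - 4)))
    (hred : ∀ j, j + 1 < 4 * m - 4 → B.Red (r j) (r (j + 1))) {W : List ℕ} {S : List (List ℕ)}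
    (hF : IsBlueForest B (W :: S)) (hS : IsRedStack B S)
    (hW : ∀ q ∈ S.head?, ∀ y ∈ q.head?, ∀ x ∈ W.getLast?, x ∈ W.head? ∨ B.Red x y)
    (hdisj : ∀ j < 4 * m - 4, r j ∉ (W :: S).flatten)
    (hle : (W :: S).flatten.length ≤ n + 5 * m - 1)
    (hbudget : 2 * (n + 5 * m - 1) + S.length + 2 ≤ F + 2 * (W :: S).flatten.length) :
    Wins (WinCC (2 * m) n) (F + (20 * m - 4)) B := by
  induction F generalizing B W S with
  | zero => omega
  | succ F ih =>
  have push : ∀ B', B ≤ B' → IsRedStack B' (W :: S) →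
      Wins (WinCC (2 * m) n) (F + (20 * m - 4)) B' := by
    intro B' hB' hS'
    by_cases hfull : (W :: S).flatten.length = n + 5 * m - 1
    · refine (wins_of_red_stack hm hn hr (fun j hj => (hred j hj).mono hB') (hF.mono hB') hS'
        hfull.ge hdisj).mono ?_
      rw [List.length_cons]
      omega
    · obtain ⟨u, hu⟩ := Infinite.exists_notMem_finset
        ((W :: S).flatten.toFinset ∪ (Finset.range (4 * m - 4)).image r)
      rw [Finset.mem_union, List.mem_toFinset, Finset.mem_image, not_or] at hu
      have hflat : ([u] :: W :: S).flatten = u :: (W :: S).flatten := rfl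
      refine ih (W := [u]) (S := W :: S) (fun j hj => (hred j hj).mono hB') ⟨?_, ?_, ?_⟩ hS' ?_ ?_
        ?_ ?_
      · rw [hflat]
        exact hF.nodup.cons hu.1
      · rintro l (_ | ⟨_, hl⟩)
        · simp
        · exact hF.ne_nil l hl
      · rintro l (_ | ⟨_, hl⟩)
        · simp
        · exact (hF.mono hB').isChain l hl
      · exact fun q hq y hy x hx => Or.inl hx
      · intro j hj hjm
        rw [hflat, List.mem_cons] at hjm
        rcases hjm with hjm | hjm
        · exact hu.2 ⟨j, Finset.mem_range.2 hj, hjm⟩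
        · exact hdisj j hj hjm
      · rw [hflat, List.length_cons]
        omega
      · rw [hflat, List.length_cons, List.length_cons]
        omega
  rcases S with _ | ⟨q, S⟩
  · exact (push B le_rfl (List.isChain_singleton _)).mono (by omega)
  have hWn := hF.ne_nil W (by simp)
  have hqn := hF.ne_nil q (by simp)
  have hne : W.headD 0 ≠ q.headD 0 := by
    have := hF.nodup
    rw [List.flatten_cons, List.nodup_append] at this
    exact this.2.2 _ (headD_mem hWn) _ (List.mem_flatten.2 ⟨q, by simp, headD_mem hqn⟩)
  have hadd : F + 1 + (20 * m - 4) = F + (20 * m - 4) + 1 := by omega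
  rw [hadd]
  have hWq := hW q rfl
  refine ask_edge hne (fun B' hB' hcol => push B' hB' ?_) (fun B' hB' hcol => ?_)
  · refine List.isChain_cons_cons.2 ⟨fun y hy => ?_, hS.mono hB'⟩
    have hhead : ∀ x ∈ W.head?, B'.Red x y := by
      intro x hx
      rw [mem_head?_iff_headD hWn] at hx
      rw [mem_head?_iff_headD hqn] at hy
      rwa [hx, hy]
    exact ⟨hhead, fun x hx => (hWq y hy x hx).elim (hhead x) fun h => h.mono hB'⟩
  · have hperm : ((W.reverse ++ q) :: S).flatten.Perm (W :: q :: S).flatten := by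
      simp only [List.flatten_cons, List.append_assoc]
      exact (List.reverse_perm W).append_right _
    rw [IsRedStack, List.isChain_cons] at hS
    refine ih (W := W.reverse ++ q) (S := S) (fun j hj => (hred j hj).mono hB') ⟨?_, ?_, ?_⟩
      (IsRedStack.mono hS.2 hB') ?_ ?_ ?_ ?_
    · exact hperm.nodup_iff.2 hF.nodup
    · rintro l (_ | ⟨_, hl⟩)
      · simp [hqn]
      · exact hF.ne_nil l (List.mem_cons_of_mem _ (List.mem_cons_of_mem _ hl))
    · rintro l (_ | ⟨_, hl⟩)
      · rw [List.isChain_append, List.isChain_reverse]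
        refine ⟨((hF.mono hB').isChain W (by simp)).imp fun _ _ h => h.symm,
          (hF.mono hB').isChain q (by simp), fun x hx y hy => ?_⟩
        rw [List.getLast?_reverse, mem_head?_iff_headD hWn] at hx
        rw [mem_head?_iff_headD hqn] at hy
        rwa [hx, hy]
      · exact (hF.mono hB').isChain l (List.mem_cons_of_mem _ (List.mem_cons_of_mem _ hl))
    · intro q' hq' y hy x hx
      rw [List.getLast?_append_of_ne_nil _ hqn] at hx
      exact Or.inr (((hS.1 q' hq' y hy).2 x hx).mono hB')
    · exact fun j hj hjm => hdisj j hj (hperm.mem_iff.1 hjm)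
    · rwa [hperm.length_eq]
    · rw [hperm.length_eq]
      rw [List.length_cons] at hbudget
      omega

theorem wins_of_red_list_blue_list {m n t : ℕ} (hm : 2 ≤ m) (hn : 6 * m ≤ n) {R L : List ℕ}
    (hRL : (R ++ L).Nodup) (hRc : R.IsChain B.Red) (hLc : L.IsChain B.Blue)
    (hR : 4 * m - 4 ≤ R.length) (hL₀ : L ≠ []) (hL : L.length < n + 5 * m - 1)
    (ht : 2 * (n + 5 * m - 1) + 1 + (20 * m - 4) ≤ t + 2 * L.length) :
    Wins (WinCC (2 * m) n) t B := by
  obtain ⟨hRn, hLn, hdisj⟩ := List.nodup_append.1 hRL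
  have hget : ∀ i (hi : i < R.length), R.getD i 0 = R[i] := fun i hi => by
    rw [List.getD_eq_getElem?_getD, List.getElem?_eq_getElem hi, Option.getD_some]
  obtain ⟨u, hu⟩ := Infinite.exists_notMem_finset (R ++ L).toFinset
  rw [List.mem_toFinset, List.mem_append, not_or] at hu
  have hflat : [[u], L].flatten = u :: L := by simp
  refine (wins_of_trunk (F := t - (20 * m - 4)) hm hn (r := fun i => R.getD i 0) (W := [u])
    (S := [L]) ?_ ?_ ⟨?_, ?_, ?_⟩ (List.isChain_singleton _) ?_ ?_ ?_ ?_).mono (by omega)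
  · intro i hi j hj hij
    simp only [Set.mem_Iio] at hi hj
    simp only [hget i (by omega), hget j (by omega)] at hij
    exact hRn.getElem_inj_iff.1 hij
  · intro j hj
    simp only [hget j (by omega), hget (j + 1) (by omega)]
    exact List.isChain_iff_getElem.1 hRc j (by omega)
  · rw [hflat]
    exact hLn.cons hu.2
  · simp [hL₀]
  · simpa using hLc
  · exact fun q hq y hy x hx => Or.inl hx
  · intro j hj hjm
    simp only [hget j (by omega), hflat, List.mem_cons] at hjm
    rcases hjm with hjm | hjm
    · exact hu.1 (hjm ▸ List.getElem_mem _)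
    · exact hdisj _ (List.getElem_mem _) _ hjm rfl
  · rw [hflat, List.length_cons]
    omega
  · rw [hflat, List.length_cons, List.length_cons, List.length_nil]
    omega

/-- Builder extends a red path `R` and a blue path `L` simultaneously, gaining a vertex in every
two rounds, until one of them is long enough. -/
theorem wins_of_red_blue_paths {m n f : ℕ} (hm : 2 ≤ m) (hn : 6 * m ≤ n) {R L : List ℕ}
    (hRL : (R ++ L).Nodup) (hRc : R.IsChain B.Red) (hLc : L.IsChain B.Blue)
    (hR : R.length ≤ 4 * m - 3) (hL : L.length ≤ n + 3 * m + 2)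
    (hf : 2 * n + 38 * m - 11 ≤ f + 2 * (R.length + L.length)) : Wins (WinCC (2 * m) n) f B := by
  induction f using Nat.strong_induction_on generalizing B R L with
  | _ f ih =>
  have hfresh : ∀ T : List ℕ, ∃ u, u ∉ T := fun T => by
    obtain ⟨u, hu⟩ := Infinite.exists_notMem_finset T.toFinset
    exact ⟨u, by simpa using hu⟩
  wlog hR₀ : R ≠ [] generalizing R L
  · obtain rfl := not_not.1 hR₀
    obtain ⟨u, hu⟩ := hfresh L
    refine this (R := [u]) (L := L) (hRL.cons hu) (List.isChain_singleton _) hLc (by simp; omega)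
      hL ?_ (by simp)
    simp only [List.length_nil, List.length_singleton] at hf ⊢
    omega
  wlog hL₀ : L ≠ [] generalizing R L
  · obtain rfl := not_not.1 hL₀
    obtain ⟨u, hu⟩ := hfresh R
    refine this (R := R) (L := [u]) ?_ hRc (List.isChain_singleton _) hR (by simp) ?_ hR₀ (by simp)
    · rw [List.append_nil] at hRL
      exact (List.perm_append_singleton u R).nodup_iff.2 (hRL.cons hu)
    · simp only [List.length_nil, List.length_singleton] at hf ⊢
      omega
  rcases R with _ | ⟨v, R⟩
  · exact absurd rfl hR₀
  rcases L with _ | ⟨w, L⟩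
  · exact absurd rfl hL₀
  by_cases hL' : n + 3 * m + 1 ≤ (w :: L).length
  · exact (wins_of_blue_list hm hn (List.nodup_append.1 hRL).2.1 hL' hLc).mono (by omega)
  by_cases hR' : 4 * m - 4 ≤ (v :: R).length
  · exact wins_of_red_list_blue_list hm hn hRL hRc hLc hR' (by simp) (by omega) (by omega)
  simp only [List.length_cons] at hR hL hf hL' hR'
  obtain ⟨g, rfl⟩ : ∃ g, f = g + 1 + 1 := ⟨f - 2, by omega⟩
  obtain ⟨u, hu⟩ := hfresh (v :: R ++ w :: L)
  have hnodup : (u :: (v :: R ++ w :: L)).Nodup := hRL.cons hu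
  have hvw : v ≠ w := (List.nodup_append.1 hRL).2.2 v (by simp) w (by simp)
  have huv : u ≠ v := by rintro rfl; simp at hu
  have huw : u ≠ w := by rintro rfl; simp at hu
  refine ask_edge hvw (fun B₁ h₁ r₁ => ?_) (fun B₁ h₁ b₁ => ?_)
  · have hRc₁ : (v :: R).IsChain B₁.Red := hRc.imp fun _ _ h => h.mono h₁
    have hLc₁ : (w :: L).IsChain B₁.Blue := hLc.imp fun _ _ h => h.mono h₁
    refine ask_edge huw (fun B₂ h₂ r₂ => ?_) (fun B₂ h₂ b₂ => ?_)
    · refine ih g (by omega) (R := u :: w :: v :: R) (L := L) ?_ ?_ ?_ ?_ ?_ ?_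
      · exact (List.perm_middle.symm.cons u).nodup_iff.2 hnodup
      · exact List.isChain_cons_cons.2 ⟨r₂, List.isChain_cons_cons.2 ⟨r₁.symm.mono h₂,
          hRc₁.imp fun _ _ h => h.mono h₂⟩⟩
      · exact (List.isChain_cons.1 hLc₁).2.imp fun _ _ h => h.mono h₂
      all_goals
        try simp only [List.length_cons]
        omega
    · refine ih g (by omega) (R := v :: R) (L := u :: w :: L) ?_ ?_ ?_ ?_ ?_ ?_
      · exact List.perm_middle.nodup_iff.2 hnodup
      · exact hRc₁.imp fun _ _ h => h.mono h₂
      · exact List.isChain_cons_cons.2 ⟨b₂, hLc₁.imp fun _ _ h => h.mono h₂⟩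
      all_goals
        try simp only [List.length_cons]
        omega
  · have hRc₁ : (v :: R).IsChain B₁.Red := hRc.imp fun _ _ h => h.mono h₁
    have hLc₁ : (w :: L).IsChain B₁.Blue := hLc.imp fun _ _ h => h.mono h₁
    refine ask_edge huv (fun B₂ h₂ r₂ => ?_) (fun B₂ h₂ b₂ => ?_)
    · refine ih g (by omega) (R := u :: v :: R) (L := w :: L) hnodup ?_ ?_ ?_ ?_ ?_
      · exact List.isChain_cons_cons.2 ⟨r₂, hRc₁.imp fun _ _ h => h.mono h₂⟩
      · exact hLc₁.imp fun _ _ h => h.mono h₂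
      all_goals
        try simp only [List.length_cons]
        omega
    · refine ih g (by omega) (R := R) (L := u :: v :: w :: L) ?_ ?_ ?_ ?_ ?_ ?_
      · exact (List.perm_middle.trans (List.perm_middle.cons u)).nodup_iff.2 hnodup
      · exact (List.isChain_cons.1 hRc₁).2.imp fun _ _ h => h.mono h₂
      · exact List.isChain_cons_cons.2 ⟨b₂, List.isChain_cons_cons.2 ⟨b₁.mono h₂,
          hLc₁.imp fun _ _ h => h.mono h₂⟩⟩
      all_goals
        try simp only [List.length_cons]
        omega

end

/-- For every even `k ≥ 4` and `n ≥ 3k`, `r̃(C_k, C_n) ≤ 2n + 20k`. -/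
theorem online_ramsey_even_cycle (k n : ℕ) (hk : 4 ≤ k) (hke : Even k)
    (hn : 3 * k ≤ n) :
    BuilderWinsIn emptyBoard (WinCC k n) (2 * n + 20 * k) := by
  obtain ⟨m, rfl⟩ := hke.two_dvd
  have hm : 2 ≤ m := by omega
  refine Wins.builderWinsIn (Wins.mono (t := 2 * n + 38 * m - 15) ?_ (by omega))
  refine wins_of_red_blue_paths hm (by omega) (R := [0]) (L := [1]) (by simp)
    (List.isChain_singleton _) (List.isChain_singleton _) ?_ ?_ ?_
  all_goals
    simp only [List.length_singleton]
    omega
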